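/- arXiv:1403.7881 — 2 statements merged into one kernel-verified Lean document; each statement's English description precedes it below -/
import Mathlib

section
/- Let G be a numeration system with coefficients a_0 ≥ a_1 ≥ … ≥ a_{d−1} ≥ 1, irreducible characteristic polynomial and Pisot characteristic root β. Then the image ψ_β(ℕ) of the positive integers under the extended β-adic Monna map is a dense subset of [0,1). -/
open scoped BigOperators
open scoped Classical

/-- A numeration system `G = (G_n)` defined by a linear recurrence with
nonincreasing positive coefficients `a_0 ≥ a_1 ≥ … ≥ a_{d-1} ≥ 1`, together with
the regular (greedy) digit expansion `dig n k = ε_k(n)` of every nonnegative integer. -/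
structure NumerationSystem where
  d : ℕ
  hd : 1 ≤ d
  a : ℕ → ℕ
  ha_anti : ∀ i j, i ≤ j → j < d → a j ≤ a i
  ha_pos : ∀ i, i < d → 1 ≤ a i
  G : ℕ → ℕ
  hG0 : G 0 = 1
  hG_small : ∀ k, 0 < k → k < d → G k = (∑ i ∈ Finset.range k, a i * G (k - 1 - i)) + 1
  hG_rec : ∀ n : ℕ, G (n + d) = ∑ i ∈ Finset.range d, a i * G (n + d - 1 - i)
  dig : ℕ → ℕ → ℕ
  hdig_fin : ∀ n : ℕ, ∃ K, (∀ k, K ≤ k → dig n k = 0) ∧ n = ∑ k ∈ Finset.range K, dig n k * G k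
  hdig_reg : ∀ n K, ∑ k ∈ Finset.range K, dig n k * G k < G K

namespace NumerationSystem

/-- The characteristic polynomial `X^d - a_0 X^{d-1} - … - a_{d-1}` of the numeration system. -/
noncomputable def charPoly (S : NumerationSystem) : Polynomial ℤ :=
  Polynomial.X ^ S.d -
    ∑ i ∈ Finset.range S.d, Polynomial.C (S.a i : ℤ) * Polynomial.X ^ (S.d - 1 - i)

/-- `β` is the characteristic root of `S`: the characteristic polynomial is irreducible,
`β` is a root, `β > 1`, and every other complex root has modulus `< 1` (so `β` is Pisot). -/
def IsCharRoot (S : NumerationSystem) (β : ℝ) : Prop :=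
  Irreducible (S.charPoly.map (Int.castRingHom ℚ)) ∧
  (Polynomial.aeval β) S.charPoly = 0 ∧ 1 < β ∧
  ∀ z : ℂ, (Polynomial.aeval z) S.charPoly = 0 → z ≠ (β : ℂ) → ‖z‖ < 1

/-- `F_{K,r}` : the number of `n < G (K+r)` whose regular expansion starts with the word `w`. -/
noncomputable def F (S : NumerationSystem) (w : ℕ → ℕ) (K r : ℕ) : ℕ :=
  ((Finset.range (S.G (K + r))).filter (fun n => ∀ i, i < K → S.dig n i = w i)).card

/-- The measure `μ` of the cylinder set given by the word `w` of length `K`. -/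
noncomputable def mu (S : NumerationSystem) (β : ℝ) (w : ℕ → ℕ) (K : ℕ) : ℝ :=
  (∑ j ∈ Finset.range S.d,
      ((S.F w K j : ℝ) - ∑ i ∈ Finset.range j, (S.a i : ℝ) * (S.F w K (j - 1 - i) : ℝ))
        * β ^ (S.d - 1 - j)) /
    (β ^ K * ∑ i ∈ Finset.range S.d, β ^ i)

/-- The extended `β`-adic Monna map on digit sequences:
`ψ_β(x) = ∑_{k ≥ 0} ∑_{i < x_k} μ(Z(x_0,…,x_{k-1},i))`. -/
noncomputable def psiSeq (S : NumerationSystem) (β : ℝ) (x : ℕ → ℕ) : ℝ :=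
  ∑' k : ℕ, ∑ i ∈ Finset.range (x k), S.mu β (fun m => if m < k then x m else i) (k + 1)

/-- The extended `β`-adic Monna map on integers (via the regular `G`-expansion). -/
noncomputable def psi (S : NumerationSystem) (β : ℝ) (n : ℕ) : ℝ :=
  S.psiSeq β (S.dig n)

/-- A digit sequence is regular if all its partial sums satisfy the greedy condition. -/
def RegularSeq (S : NumerationSystem) (x : ℕ → ℕ) : Prop :=
  ∀ K, ∑ k ∈ Finset.range K, x k * S.G k < S.G K

/-- A finite word of length `K` is a regular digit string. -/
def RegularWord (S : NumerationSystem) (w : ℕ → ℕ) (K : ℕ) : Prop :=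
  ∀ K', K' ≤ K → ∑ k ∈ Finset.range K', w k * S.G k < S.G K'

/-- The Galois closure `K = ℚ(β_1,…,β_d)` of `ℚ(β)`, realized inside `ℂ` as the field
generated by all roots of the characteristic polynomial. -/
noncomputable def galoisClosure (S : NumerationSystem) : IntermediateField ℚ ℂ :=
  IntermediateField.adjoin ℚ {z : ℂ | (Polynomial.aeval z) S.charPoly = 0}

/-- `k` is maximal with `a_0 = a_1 = … = a_k`. -/
def IsPlateau (S : NumerationSystem) (k : ℕ) : Prop :=
  k < S.d ∧ (∀ i, i ≤ k → S.a i = S.a 0) ∧ (k + 1 < S.d → S.a (k + 1) ≠ S.a 0)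

/-- `βc 0, …, βc (d-1)` enumerate the (distinct) roots of the characteristic polynomial and
`b` gives the coefficients in the explicit formula `G_n = ∑_j b_j β_j^n`. -/
def IsRootData (S : NumerationSystem) (βc b : ℕ → ℂ) : Prop :=
  (∀ j, j < S.d → (Polynomial.aeval (βc j)) S.charPoly = 0) ∧
  (∀ j j', j < S.d → j' < S.d → βc j = βc j' → j = j') ∧
  ∀ n : ℕ, (S.G n : ℂ) = ∑ j ∈ Finset.range S.d, b j * βc j ^ n

end NumerationSystem

/-- The maximal digit pattern: `ε_i = a_0` if `(k+1) ∤ i` or `i = 0`, and `ε_i = a_0 - 1`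
otherwise. -/
def maxPattern (a0 k i : ℕ) : ℕ :=
  if (k + 1) ∣ i ∧ i ≠ 0 then a0 - 1 else a0

/-- The constant `A = 1 + ∑_j a_0 b_j/(1-β_j) - ∑_j b_j/(1-β_j^{k+1})` from the corner
analysis (for a corner coordinate equal to 1). -/
noncomputable def cornerA (S : NumerationSystem) (βc b : ℕ → ℂ) (k : ℕ) : ℂ :=
  1 + ∑ j ∈ Finset.range S.d, (S.a 0 : ℂ) * b j / (1 - βc j)
    - ∑ j ∈ Finset.range S.d, b j / (1 - βc j ^ (k + 1))

/-- The coefficient `c_j^{(i)} = ∑_{m ≥ 0} b_j ε_{n_0+m}(N) β_j^m` (corner coordinate 0). -/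
noncomputable def cornerC0 (S : NumerationSystem) (βc b : ℕ → ℂ) (N n0 j : ℕ) : ℂ :=
  ∑' m : ℕ, (S.dig N (n0 + m) : ℂ) * b j * βc j ^ m

/-- The coefficient `c_j^{(i)}` for a corner coordinate equal to 1. -/
noncomputable def cornerC1 (S : NumerationSystem) (βc b : ℕ → ℂ) (k N n1 j : ℕ) : ℂ :=
  cornerC0 S βc b N n1 j - (S.a 0 : ℂ) * b j / (1 - βc j)
    + b j * βc j ^ ((n1 + k) / (k + 1) * (k + 1) - n1) / (1 - βc j ^ (k + 1))

/-- Lexicographic comparison of words of length `n`, reading the highest digit first: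
`w <_lex w'` iff they differ at some position `m` with `w m < w' m` and agree above `m`. -/
def LexLtBelow (n : ℕ) (w w' : ℕ → ℕ) : Prop :=
  ∃ m, m < n ∧ w m < w' m ∧ ∀ j, m < j → j < n → w j = w' j

/-- The exponent `H` of the corner avoidance theorem. -/
noncomputable def cornerH {s : ℕ} (h : Fin s → ℕ) : ℕ :=
  if ∀ i, h i = 0 then 2 else if ∀ i, h i = 1 then s else 1 + ∑ i, h i

/-- A sequence `(x_n)_{n>0}` in `[0,1)^s` is uniformly distributed modulo 1. -/
def IsUniformlyDistributed {s : ℕ} (x : ℕ → Fin s → ℝ) : Prop :=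
  ∀ a b : Fin s → ℝ, (∀ i, 0 ≤ a i) → (∀ i, a i ≤ b i) → (∀ i, b i ≤ 1) →
    Filter.Tendsto
      (fun N : ℕ =>
        (((Finset.Icc 1 N).filter fun n => ∀ i, a i ≤ x n i ∧ x n i < b i).card : ℝ) / (N : ℝ))
      Filter.atTop (nhds (∏ i, (b i - a i)))

/-!
The coefficients are nonincreasing, so every block `[c G_N, c G_N + x)` with `x ≤ G_N` that lies
below `G_{N+1}` carries the same low digits as `[0, x)`. Hence for a fixed cylinder the counts
`r ↦ F_{K,r}` satisfy the recurrence of `G`. The numerator of `μ` is a left eigenvector, for the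
eigenvalue `β`, of the shift acting on solutions of this recurrence. This makes `μ` additive on
cylinders, with total mass `1`, and it decays like `β^{-K}`.

Given `x ∈ [0,1)`, refining cylinders greedily yields words `w` of every length `K` for which `x`
lies between the `K`-th partial sum of `ψ_β` along `w` and that sum plus `μ(Z(w))`. As `μ(Z(w))` is
then nonzero, some integer `n` starts with `w`, and `|x - ψ_β(n)| = O(β^{-K})`. The value at
`n = 0` may be discarded because `[0,1)` has no isolated points.
-/

lemma subset_closure_sdiff_singleton_of_preperfect {X : Type*} [TopologicalSpace X] [T1Space X]
    {C s : Set X} (hC : Preperfect C) (hs : C ⊆ closure s) (p : X) :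
    C ⊆ closure (s \ {p}) := by
  have hne : C \ {p} ⊆ closure (s \ {p}) := by
    refine (Set.sdiff_subset_sdiff_left hs).trans ?_
    simpa only [closure_singleton] using closure_sdiff (s := s) (t := {p})
  intro x hx
  rcases eq_or_ne x p with rfl | hxp
  · have hacc : x ∈ closure (C \ {x}) :=
      mem_closure_iff_clusterPt.2 (accPt_principal_iff_clusterPt.1 (hC x hx))
    exact closure_minimal hne isClosed_closure hacc
  · exact hne ⟨hx, hxp⟩

lemma exists_sum_range_le_lt {M : Type*} [AddCommMonoid M] [LinearOrder M] (c : ℕ → M) {x : M}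
    (h₀ : 0 ≤ x) {n : ℕ} (hn : x < ∑ i ∈ Finset.range n, c i) :
    ∃ i, ∑ j ∈ Finset.range i, c j ≤ x ∧ x < ∑ j ∈ Finset.range (i + 1), c j := by
  induction n with
  | zero => exact absurd hn (by simpa using h₀)
  | succ n ih => exact (lt_or_ge x _).elim ih fun h => ⟨n, h, hn⟩

/-! ### Masses of cylinder sets -/

/-- The word `w_0 … w_{K-1} i`. It is encoded as a sequence that is constantly `i` from position
`K` on, which is the shape used in `NumerationSystem.psiSeq`. -/
def wordSnoc (w : ℕ → ℕ) (K i : ℕ) : ℕ → ℕ := fun m => if m < K then w m else i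

lemma wordSnoc_of_lt (w : ℕ → ℕ) {K m : ℕ} (i : ℕ) (h : m < K) : wordSnoc w K i m = w m :=
  if_pos h

lemma wordSnoc_self (w : ℕ → ℕ) (K i : ℕ) : wordSnoc w K i K = i :=
  if_neg (lt_irrefl K)

lemma wordSnoc_congr {w w' : ℕ → ℕ} {K : ℕ} (h : ∀ j < K, w j = w' j) (i : ℕ) :
    wordSnoc w K i = wordSnoc w' K i :=
  funext fun j => ite_congr rfl (h j) fun _ => rfl

lemma forall_lt_succ_eq_wordSnoc {x w : ℕ → ℕ} {K i : ℕ} :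
    (∀ j < K + 1, x j = wordSnoc w K i j) ↔ (∀ j < K, x j = w j) ∧ x K = i := by
  rw [Nat.forall_lt_succ_right, wordSnoc_self]
  exact and_congr_left' (forall₂_congr fun j hj => by rw [wordSnoc_of_lt w i hj])

/-- Finite additivity of a signed mass on the cylinder sets of sequences of digits `< B`, where
`m w K` is the mass of the cylinder `Z(w_0, …, w_{K-1})`. -/
def IsCylinderMass (B : ℕ) (m : (ℕ → ℕ) → ℕ → ℝ) : Prop :=
  ∀ w K, ∑ i ∈ Finset.range B, m (wordSnoc w K i) (K + 1) = m w K

/-- The `k`-th term of the Monna map of `m`: the total mass of the cylinders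
`Z(x_0, …, x_{k-1}, i)` with `i < x_k`. -/
noncomputable def monnaTerm (m : (ℕ → ℕ) → ℕ → ℝ) (x : ℕ → ℕ) (k : ℕ) : ℝ :=
  ∑ i ∈ Finset.range (x k), m (wordSnoc x k i) (k + 1)

/-- The Monna map of `m`, of which `NumerationSystem.psiSeq` is the instance `m = μ`. -/
noncomputable def monnaMap (m : (ℕ → ℕ) → ℕ → ℝ) (x : ℕ → ℕ) : ℝ :=
  ∑' k, monnaTerm m x k

section MonnaMap

variable {m : (ℕ → ℕ) → ℕ → ℝ}

lemma sum_monnaTerm_congr {w w' : ℕ → ℕ} {K : ℕ} (h : ∀ j < K, w j = w' j) :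
    ∑ k ∈ Finset.range K, monnaTerm m w k = ∑ k ∈ Finset.range K, monnaTerm m w' k := by
  refine Finset.sum_congr rfl fun k hk => ?_
  have hkK : k < K := Finset.mem_range.1 hk
  unfold monnaTerm
  rw [h k hkK]
  exact Finset.sum_congr rfl fun i _ => by rw [wordSnoc_congr fun j hj => h j (hj.trans hkK)]

lemma sum_monnaTerm_wordSnoc (w : ℕ → ℕ) (K i : ℕ) :
    ∑ k ∈ Finset.range (K + 1), monnaTerm m (wordSnoc w K i) k =
      ∑ k ∈ Finset.range K, monnaTerm m w k +
        ∑ j ∈ Finset.range i, m (wordSnoc w K j) (K + 1) := by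
  have hprefix : ∀ j < K, wordSnoc w K i j = w j := fun _ hj => wordSnoc_of_lt w i hj
  rw [Finset.sum_range_succ, sum_monnaTerm_congr hprefix, monnaTerm, wordSnoc_self]
  simp only [wordSnoc_congr hprefix]

lemma IsCylinderMass.exists_word_sum_monnaTerm_le_lt {B : ℕ} (hm : IsCylinderMass B m) {t : ℝ}
    (ht : t ∈ Set.Ico 0 (m 0 0)) (K : ℕ) :
    ∃ w, ∑ k ∈ Finset.range K, monnaTerm m w k ≤ t ∧
      t < ∑ k ∈ Finset.range K, monnaTerm m w k + m w K := by
  induction K with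
  | zero => exact ⟨0, by simpa using ht.1, by simpa using ht.2⟩
  | succ K ih =>
    obtain ⟨w, hle, hlt⟩ := ih
    rw [← hm w K] at hlt
    obtain ⟨i, hi, hi'⟩ := exists_sum_range_le_lt (fun i => m (wordSnoc w K i) (K + 1))
      (sub_nonneg.2 hle) (sub_lt_iff_lt_add'.2 hlt)
    rw [Finset.sum_range_succ] at hi'
    refine ⟨wordSnoc w K i, ?_, ?_⟩ <;> rw [sum_monnaTerm_wordSnoc] <;> linarith

variable {C r : ℝ}

lemma abs_monnaTerm_le (hC : ∀ w K, |m w K| ≤ C * r ^ K) {x : ℕ → ℕ} {B k : ℕ} (hx : x k ≤ B) :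
    |monnaTerm m x k| ≤ B * C * r * r ^ k := by
  have hCr : 0 ≤ C * r ^ (k + 1) := (abs_nonneg _).trans (hC 0 (k + 1))
  calc |monnaTerm m x k|
      ≤ ∑ i ∈ Finset.range (x k), |m (wordSnoc x k i) (k + 1)| := Finset.abs_sum_le_sum_abs _ _
    _ ≤ ∑ _i ∈ Finset.range (x k), C * r ^ (k + 1) := Finset.sum_le_sum fun _ _ => hC _ _
    _ = x k * (C * r ^ (k + 1)) := by rw [Finset.sum_const, Finset.card_range, nsmul_eq_mul]
    _ ≤ B * (C * r ^ (k + 1)) := by gcongr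
    _ = B * C * r * r ^ k := by ring

lemma abs_sum_monnaTerm_sub_monnaMap_le (hr : r < 1) (hC : ∀ w K, |m w K| ≤ C * r ^ K)
    {x : ℕ → ℕ} {B : ℕ} (hx : ∀ k, x k ≤ B) (K : ℕ) :
    |∑ k ∈ Finset.range K, monnaTerm m x k - monnaMap m x| ≤ B * C * r * r ^ K / (1 - r) := by
  have hbound : ∀ k, ‖monnaTerm m x k‖ ≤ B * C * r * r ^ k := fun k => abs_monnaTerm_le hC (hx k)
  have hsum : Summable (monnaTerm m x) :=
    summable_iff_cauchySeq_finset.2 (cauchySeq_finset_of_geometric_bound hr hbound)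
  exact norm_sub_le_of_geometric_bound_of_hasSum hr hbound hsum.hasSum K

theorem IsCylinderMass.mem_closure_image_monnaMap {A B : ℕ} (hm : IsCylinderMass A m)
    (hr₀ : 0 ≤ r) (hr₁ : r < 1) (hC : ∀ w K, |m w K| ≤ C * r ^ K) {D : Set (ℕ → ℕ)}
    (hB : ∀ x ∈ D, ∀ k, x k ≤ B) (hD : ∀ w K, m w K ≠ 0 → ∃ x ∈ D, ∀ j < K, x j = w j) {t : ℝ}
    (ht : t ∈ Set.Ico 0 (m 0 0)) : t ∈ closure (monnaMap m '' D) := by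
  have happrox : ∀ K, ∃ x ∈ D, |monnaMap m x - t| ≤ (C + B * C * r / (1 - r)) * r ^ K := by
    intro K
    obtain ⟨w, hle, hlt⟩ := hm.exists_word_sum_monnaTerm_le_lt ht K
    have hpos : 0 < m w K := by linarith
    obtain ⟨x, hxD, hxw⟩ := hD w K hpos.ne'
    refine ⟨x, hxD, ?_⟩
    have hmass := (le_abs_self _).trans (hC w K)
    have htail := abs_sum_monnaTerm_sub_monnaMap_le hr₁ hC (hB x hxD) K
    rw [sum_monnaTerm_congr hxw, mul_div_right_comm, abs_le] at htail
    rw [add_mul, abs_le]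
    constructor <;> linarith
  choose x hxD hx using happrox
  have hlim : Filter.Tendsto (fun K => monnaMap m (x K)) Filter.atTop (nhds t) := by
    refine tendsto_iff_norm_sub_tendsto_zero.2 (squeeze_zero (fun _ => norm_nonneg _) hx ?_)
    simpa only [mul_zero] using (tendsto_pow_atTop_nhds_zero_of_lt_one hr₀ hr₁).const_mul _
  exact mem_closure_of_tendsto hlim (.of_forall fun K => Set.mem_image_of_mem _ (hxD K))

end MonnaMap

namespace NumerationSystem

variable (S : NumerationSystem)

/-! ### Regular expansions -/

lemma G_eq_sum_add_ite (k : ℕ) :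
    S.G k = ∑ i ∈ Finset.range (min k S.d), S.a i * S.G (k - 1 - i) + if k < S.d then 1 else 0 := by
  split_ifs with h
  · rcases Nat.eq_zero_or_pos k with rfl | hk
    · simp [S.hG0]
    · rw [min_eq_left h.le, S.hG_small k hk h]
  · obtain ⟨n, rfl⟩ := Nat.exists_eq_add_of_le' (not_lt.1 h)
    rw [min_eq_right (not_lt.1 h), S.hG_rec n, add_zero]

lemma sum_a_mul_G_le {L k : ℕ} (hk : L ≤ k) (hd : L ≤ S.d) :
    ∑ i ∈ Finset.range L, S.a i * S.G (k - 1 - i) ≤ S.G k := by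
  rw [S.G_eq_sum_add_ite k]
  exact (Finset.sum_le_sum_of_subset (Finset.range_subset_range.2 (le_min hk hd))).trans
    (Nat.le_add_right _ _)

lemma G_monotone : Monotone S.G := by
  refine monotone_nat_of_le_succ fun k => ?_
  have hle : S.a 0 * S.G k ≤ S.G (k + 1) := by
    simpa using S.sum_a_mul_G_le (Nat.le_add_left 1 k) S.hd
  exact (Nat.le_mul_of_pos_left _ (S.ha_pos 0 S.hd)).trans hle

lemma G_pos (k : ℕ) : 0 < S.G k :=
  one_pos.trans_le (S.hG0.symm.trans_le (S.G_monotone k.zero_le))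

lemma G_succ_le (k : ℕ) : S.G (k + 1) ≤ (S.a 0 + 1) * S.G k := by
  obtain ⟨L, hL⟩ : ∃ L, min (k + 1) S.d = L + 1 :=
    Nat.exists_eq_succ_of_ne_zero (by have := S.hd; omega)
  have hshift : ∀ i ∈ Finset.range L, S.a (i + 1) * S.G (k + 1 - 1 - (i + 1)) ≤
      S.a i * S.G (k - 1 - i) := by
    intro i hi
    have hiL := Finset.mem_range.1 hi
    rw [show k + 1 - 1 - (i + 1) = k - 1 - i by omega]
    exact Nat.mul_le_mul_right _ (S.ha_anti i (i + 1) i.le_succ (by omega))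
  have hrest : ∑ i ∈ Finset.range L, S.a (i + 1) * S.G (k + 1 - 1 - (i + 1)) +
      (if k + 1 < S.d then 1 else 0) ≤ S.G k := by
    rw [S.G_eq_sum_add_ite k]
    refine add_le_add ((Finset.sum_le_sum hshift).trans (Finset.sum_le_sum_of_subset
      (Finset.range_subset_range.2 (by omega)))) ?_
    split_ifs <;> omega
  rw [S.G_eq_sum_add_ite (k + 1), hL, Finset.sum_range_succ', add_mul, one_mul]
  simp only [Nat.add_sub_cancel, Nat.sub_zero] at hrest ⊢
  omega

lemma dig_le (n k : ℕ) : S.dig n k ≤ S.a 0 := by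
  have hreg := S.hdig_reg n (k + 1)
  rw [Finset.sum_range_succ] at hreg
  have hlt : S.dig n k * S.G k < (S.a 0 + 1) * S.G k :=
    (Nat.le_add_left _ _).trans_lt (hreg.trans_le (S.G_succ_le k))
  exact Nat.lt_succ_iff.1 (lt_of_mul_lt_mul_right hlt (Nat.zero_le _))

lemma dig_mul_G_le (n k : ℕ) : S.dig n k * S.G k ≤ n := by
  obtain ⟨K, hzero, hsum⟩ := S.hdig_fin n
  rcases lt_or_ge k K with hk | hk
  · conv_rhs => rw [hsum]
    exact Finset.single_le_sum (f := fun k => S.dig n k * S.G k) (fun _ _ => Nat.zero_le _)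
      (Finset.mem_range.2 hk)
  · simp [hzero k hk]

variable {S}

lemma dig_eq_zero_of_lt_G {n N k : ℕ} (h : n < S.G N) (hk : N ≤ k) : S.dig n k = 0 := by
  by_contra hne
  have hle := (Nat.le_mul_of_pos_left (S.G k) (Nat.pos_of_ne_zero hne)).trans (S.dig_mul_G_le n k)
  exact absurd (S.G_monotone hk) (hle.trans_lt h).not_ge

lemma sum_dig_mul_G_of_lt {n N : ℕ} (h : n < S.G N) :
    ∑ k ∈ Finset.range N, S.dig n k * S.G k = n := by
  obtain ⟨K, hzero, hsum⟩ := S.hdig_fin n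
  calc ∑ k ∈ Finset.range N, S.dig n k * S.G k
      = ∑ k ∈ Finset.range (max K N), S.dig n k * S.G k :=
        (Finset.eventually_constant_sum (fun k hk => by rw [dig_eq_zero_of_lt_G h hk, zero_mul])
          (le_max_right K N)).symm
    _ = ∑ k ∈ Finset.range K, S.dig n k * S.G k :=
        Finset.eventually_constant_sum (fun k hk => by rw [hzero k hk, zero_mul])
          (le_max_left K N)
    _ = n := hsum.symm

lemma RegularWord.eq_of_sum_eq {x y : ℕ → ℕ} {K : ℕ} (hx : S.RegularWord x K)
    (hy : S.RegularWord y K)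
    (h : ∑ k ∈ Finset.range K, x k * S.G k = ∑ k ∈ Finset.range K, y k * S.G k) :
    ∀ i < K, x i = y i := by
  induction K with
  | zero => exact fun i hi => absurd hi i.not_lt_zero
  | succ K ih =>
    rw [Finset.sum_range_succ, Finset.sum_range_succ] at h
    have hlow : ∑ k ∈ Finset.range K, x k * S.G k = ∑ k ∈ Finset.range K, y k * S.G k := by
      simpa only [Nat.add_mul_mod_self_right, Nat.mod_eq_of_lt (hx K K.le_succ),
        Nat.mod_eq_of_lt (hy K K.le_succ)] using congrArg (· % S.G K) h
    have htop : x K = y K :=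
      Nat.eq_of_mul_eq_mul_right (S.G_pos K) (Nat.add_left_cancel (hlow ▸ h))
    exact Nat.forall_lt_succ_right.2 ⟨ih (fun K' hK' => hx K' (hK'.trans K.le_succ))
      (fun K' hK' => hy K' (hK'.trans K.le_succ)) hlow, htop⟩

lemma regularWord_dig (n K : ℕ) : S.RegularWord (S.dig n) K := fun _ _ => S.hdig_reg n _

lemma dig_mul_G_add {c m N i : ℕ} (hm : m < S.G N) (h : c * S.G N + m < S.G (N + 1))
    (hi : i < N) : S.dig (c * S.G N + m) i = S.dig m i := by
  refine (regularWord_dig _ N).eq_of_sum_eq (regularWord_dig _ N) ?_ i hi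
  have hsum := sum_dig_mul_G_of_lt h
  rw [Finset.sum_range_succ] at hsum
  rw [sum_dig_mul_G_of_lt hm]
  simpa only [Nat.add_mul_mod_self_right, Nat.mul_add_mod_self_right, Nat.mod_eq_of_lt hm,
    Nat.mod_eq_of_lt (S.hdig_reg _ N)] using congrArg (· % S.G N) hsum

/-! ### Counting expansions with a given prefix -/

variable (S) in
/-- The number of integers `n < x` whose regular expansion begins with `w_0, …, w_{K-1}`. It
extends `F` to arbitrary bounds: `F w K r` is its value at `x = G_{K+r}`. -/
noncomputable def prefixCount (w : ℕ → ℕ) (K x : ℕ) : ℕ :=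
  Nat.count (fun n => ∀ i < K, S.dig n i = w i) x

lemma F_eq_prefixCount (w : ℕ → ℕ) (K r : ℕ) :
    S.F w K r = S.prefixCount w K (S.G (K + r)) := by
  rw [prefixCount, Nat.count_eq_card_filter_range, F]

lemma prefixCount_zero (w : ℕ → ℕ) (K : ℕ) : S.prefixCount w K 0 = 0 := Nat.count_zero _

variable {w : ℕ → ℕ} {K N : ℕ}

lemma prefixCount_mul_G_add (hK : K ≤ N) {c x : ℕ} (hx : x ≤ S.G N)
    (h : c * S.G N + x ≤ S.G (N + 1)) :
    S.prefixCount w K (c * S.G N + x) =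
      S.prefixCount w K (c * S.G N) + S.prefixCount w K x := by
  unfold prefixCount
  rw [Nat.count_add, Nat.count_eq_card_filter_range _ x, Nat.count_eq_card_filter_range _ x]
  congr 2
  refine Finset.filter_congr fun m hm => forall₂_congr fun i hi => ?_
  have hmx := Finset.mem_range.1 hm
  rw [dig_mul_G_add (by omega) (by omega) (hi.trans_le hK)]

lemma prefixCount_mul_G (hK : K ≤ N) {c : ℕ} (h : c * S.G N ≤ S.G (N + 1)) :
    S.prefixCount w K (c * S.G N) = c * S.prefixCount w K (S.G N) := by
  induction c with
  | zero => simp only [zero_mul, prefixCount_zero]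
  | succ c ih =>
    rw [add_mul, one_mul] at h
    rw [add_mul, one_mul, prefixCount_mul_G_add hK le_rfl h, ih (by omega), add_mul, one_mul]

variable (S) in
lemma sum_a_add_mul_G_le {j L : ℕ} (N : ℕ) (hL : j + L ≤ S.d) :
    ∑ s ∈ Finset.range L, S.a (j + s) * S.G (N + L - 1 - s) ≤ S.G (N + L) :=
  (Finset.sum_le_sum fun s hs => Nat.mul_le_mul_right _
    (S.ha_anti s (j + s) (Nat.le_add_left s j) (by have := Finset.mem_range.1 hs; omega))).trans
    (S.sum_a_mul_G_le (Nat.le_add_left L N) (by omega))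

lemma prefixCount_sum_a_add_mul_G (hK : K ≤ N) {j L : ℕ} (hL : j + L ≤ S.d) :
    S.prefixCount w K (∑ s ∈ Finset.range L, S.a (j + s) * S.G (N + L - 1 - s)) =
      ∑ s ∈ Finset.range L, S.a (j + s) * S.prefixCount w K (S.G (N + L - 1 - s)) := by
  induction L generalizing j with
  | zero => simp only [Finset.sum_range_zero, prefixCount_zero]
  | succ L ih =>
    have hidx : ∀ s, N + L - 1 - s = N + L - (s + 1) := fun s => by omega
    have hj : ∀ s, S.a (j + (s + 1)) = S.a (j + 1 + s) := fun s => congrArg S.a (by omega)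
    have htail := S.sum_a_add_mul_G_le (j := j + 1) N (show j + 1 + L ≤ S.d by omega)
    have htotal := S.sum_a_add_mul_G_le N hL
    rw [Finset.sum_range_succ', add_comm] at htotal
    rw [Finset.sum_range_succ', Finset.sum_range_succ', add_comm (Finset.sum _ _)]
    simp only [hidx] at ih htail
    simp only [hj, add_zero, Nat.sub_zero, Nat.add_succ_sub_one] at htotal ⊢
    have hNL : K ≤ N + L := by omega
    rw [prefixCount_mul_G_add hNL htail htotal, prefixCount_mul_G hNL (le_of_add_le_left htotal),
      ih (by omega), add_comm]

lemma F_add_d (w : ℕ → ℕ) (K r : ℕ) :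
    S.F w K (r + S.d) = ∑ i ∈ Finset.range S.d, S.a i * S.F w K (r + S.d - 1 - i) := by
  have hcount := prefixCount_sum_a_add_mul_G (w := w) (K.le_add_right r) (zero_add S.d).le
  simp only [zero_add] at hcount
  rw [F_eq_prefixCount, ← add_assoc, S.hG_rec, hcount]
  refine Finset.sum_congr rfl fun i hi => ?_
  have hid := Finset.mem_range.1 hi
  rw [F_eq_prefixCount, show K + r + S.d - 1 - i = K + (r + S.d - 1 - i) by omega]

lemma F_zero_left (w : ℕ → ℕ) (r : ℕ) : S.F w 0 r = S.G r := by
  simp [F]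

lemma sum_F_wordSnoc (w : ℕ → ℕ) (K r : ℕ) :
    ∑ i ∈ Finset.range (S.a 0 + 1), S.F (wordSnoc w K i) (K + 1) r = S.F w K (r + 1) := by
  unfold F
  rw [Finset.card_eq_sum_card_fiberwise (f := fun n => S.dig n K)
    (t := Finset.range (S.a 0 + 1))
    fun n _ => Finset.mem_coe.2 (Finset.mem_range_succ_iff.2 (S.dig_le n K))]
  refine Finset.sum_congr rfl fun i _ => ?_
  rw [Finset.filter_filter, show K + (r + 1) = K + 1 + r by omega]
  congr 1
  exact Finset.filter_congr fun n _ => forall_lt_succ_eq_wordSnoc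

lemma F_le_pow (w : ℕ → ℕ) (K r : ℕ) : S.F w K r ≤ (S.a 0 + 1) ^ r := by
  induction r generalizing w K with
  | zero =>
    rw [pow_zero, F, Finset.card_le_one]
    intro n hn m hm
    simp only [Finset.mem_filter, Finset.mem_range, add_zero] at hn hm
    rw [← sum_dig_mul_G_of_lt hn.1, ← sum_dig_mul_G_of_lt hm.1]
    refine Finset.sum_congr rfl fun i hi => ?_
    rw [hn.2 i (Finset.mem_range.1 hi), hm.2 i (Finset.mem_range.1 hi)]
  | succ r ih =>
    rw [← sum_F_wordSnoc]
    refine (Finset.sum_le_sum fun i _ => ih _ _).trans_eq ?_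
    rw [Finset.sum_const, Finset.card_range, smul_eq_mul, pow_succ']

lemma exists_dig_eq_of_F_ne_zero {w : ℕ → ℕ} {K r : ℕ} (h : S.F w K r ≠ 0) :
    ∃ n, ∀ j < K, S.dig n j = w j := by
  obtain ⟨n, hn⟩ := Finset.card_ne_zero.1 h
  exact ⟨n, (Finset.mem_filter.1 hn).2⟩

/-! ### The eigenfunctional of the shift -/

section Eigenfunctional

variable {R : Type*} [CommRing R]

variable (S) in
/-- The failure `f_j - (a_0 f_{j-1} + … + a_{j-1} f_0)` of a sequence `f` to satisfy at index `j`
the recurrence of `G`, cut off at index `0`. -/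
def recurrenceDefect (j : ℕ) : (ℕ → R) →ₗ[R] R :=
  .proj j - ∑ i ∈ Finset.range j, (S.a i : R) • .proj (j - 1 - i)

lemma recurrenceDefect_apply (j : ℕ) (f : ℕ → R) :
    S.recurrenceDefect j f = f j - ∑ i ∈ Finset.range j, (S.a i : R) * f (j - 1 - i) := by
  simp [recurrenceDefect, LinearMap.sum_apply]

variable (S) in
/-- The functional on sequences which gives the numerator of `mu`, applied to `r ↦ F_{K,r}`. On
solutions of the recurrence of `G` it is an eigenvector of the shift, with eigenvalue `β`. -/
def eigenfunctional (β : R) : (ℕ → R) →ₗ[R] R :=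
  ∑ j ∈ Finset.range S.d, β ^ (S.d - 1 - j) • S.recurrenceDefect j

lemma eigenfunctional_apply (β : R) (f : ℕ → R) :
    S.eigenfunctional β f =
      ∑ j ∈ Finset.range S.d, S.recurrenceDefect j f * β ^ (S.d - 1 - j) := by
  simp [eigenfunctional, LinearMap.sum_apply, mul_comm]

lemma recurrenceDefect_shift (j : ℕ) (f : ℕ → R) :
    S.recurrenceDefect j (fun r => f (r + 1)) = S.recurrenceDefect (j + 1) f + S.a j * f 0 := by
  have hidx : ∀ i ∈ Finset.range j,
      (S.a i : R) * f (j - 1 - i + 1) = S.a i * f (j + 1 - 1 - i) := fun i hi => by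
    rw [show j - 1 - i + 1 = j + 1 - 1 - i by have := Finset.mem_range.1 hi; omega]
  rw [recurrenceDefect_apply, recurrenceDefect_apply, Finset.sum_range_succ,
    Finset.sum_congr rfl hidx, Nat.add_sub_cancel, Nat.sub_self]
  ring

lemma pow_d_eq_of_aeval_charPoly {β : R} (hβ : Polynomial.aeval β S.charPoly = 0) :
    β ^ S.d = ∑ i ∈ Finset.range S.d, (S.a i : R) * β ^ (S.d - 1 - i) := by
  simpa [charPoly, sub_eq_zero] using hβ

theorem eigenfunctional_shift {β : R} (hβ : Polynomial.aeval β S.charPoly = 0) {f : ℕ → R}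
    (hf : f S.d = ∑ i ∈ Finset.range S.d, (S.a i : R) * f (S.d - 1 - i)) :
    S.eigenfunctional β (fun r => f (r + 1)) = β * S.eigenfunctional β f := by
  have hlast : S.recurrenceDefect S.d f = 0 := by rw [recurrenceDefect_apply, hf, sub_self]
  have hfirst : ∑ j ∈ Finset.range S.d, (S.a j : R) * f 0 * β ^ (S.d - 1 - j) =
      S.recurrenceDefect 0 f * β ^ (S.d - 0) := by
    rw [Nat.sub_zero, pow_d_eq_of_aeval_charPoly hβ, recurrenceDefect_apply,
      Finset.sum_range_zero, sub_zero, Finset.mul_sum]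
    exact Finset.sum_congr rfl fun _ _ => by ring
  calc S.eigenfunctional β (fun r => f (r + 1))
      = ∑ j ∈ Finset.range S.d, S.recurrenceDefect (j + 1) f * β ^ (S.d - (j + 1)) +
          S.recurrenceDefect 0 f * β ^ (S.d - 0) := by
        rw [← hfirst, ← Finset.sum_add_distrib, eigenfunctional_apply]
        refine Finset.sum_congr rfl fun j _ => ?_
        rw [recurrenceDefect_shift, add_mul, Nat.sub_sub, Nat.add_comm 1 j]
    _ = ∑ j ∈ Finset.range S.d, S.recurrenceDefect j f * β ^ (S.d - j) := by
        rw [← Finset.sum_range_succ' fun j => S.recurrenceDefect j f * β ^ (S.d - j),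
          Finset.sum_range_succ, hlast, zero_mul, add_zero]
    _ = β * S.eigenfunctional β f := by
        rw [eigenfunctional_apply, Finset.mul_sum]
        refine Finset.sum_congr rfl fun j hj => ?_
        rw [show S.d - j = S.d - 1 - j + 1 by have := Finset.mem_range.1 hj; omega, pow_succ']
        ring

lemma recurrenceDefect_G {j : ℕ} (hj : j < S.d) :
    S.recurrenceDefect j (fun r => (S.G r : R)) = 1 := by
  have h := S.G_eq_sum_add_ite j
  rw [min_eq_left hj.le, if_pos hj] at h
  rw [recurrenceDefect_apply, h]
  push_cast
  ring

lemma eigenfunctional_G (β : R) :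
    S.eigenfunctional β (fun r => (S.G r : R)) = ∑ i ∈ Finset.range S.d, β ^ i := by
  rw [eigenfunctional_apply, ← Finset.sum_range_reflect (β ^ ·)]
  exact Finset.sum_congr rfl fun j hj => by
    rw [recurrenceDefect_G (Finset.mem_range.1 hj), one_mul]

end Eigenfunctional

variable (S) in
lemma exists_abs_eigenfunctional_le (β : ℝ) (b : ℕ → ℝ) :
    ∃ C, ∀ f : ℕ → ℝ, (∀ r, |f r| ≤ b r) → |S.eigenfunctional β f| ≤ C := by
  refine ⟨∑ j ∈ Finset.range S.d,
    (b j + ∑ i ∈ Finset.range j, (S.a i : ℝ) * b (j - 1 - i)) * |β| ^ (S.d - 1 - j),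
    fun f hf => ?_⟩
  have hdefect : ∀ j, |S.recurrenceDefect j f| ≤
      b j + ∑ i ∈ Finset.range j, (S.a i : ℝ) * b (j - 1 - i) := by
    intro j
    rw [recurrenceDefect_apply]
    refine (abs_sub _ _).trans (add_le_add (hf j) ((Finset.abs_sum_le_sum_abs _ _).trans
      (Finset.sum_le_sum fun i _ => ?_)))
    rw [abs_mul, Nat.abs_cast]
    exact mul_le_mul_of_nonneg_left (hf _) (Nat.cast_nonneg _)
  rw [eigenfunctional_apply]
  refine (Finset.abs_sum_le_sum_abs _ _).trans (Finset.sum_le_sum fun j _ => ?_)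
  rw [abs_mul, abs_pow]
  exact mul_le_mul_of_nonneg_right (hdefect j) (by positivity)

/-! ### The measure `μ` -/

variable {β : ℝ}

lemma mu_eq_eigenfunctional_div (w : ℕ → ℕ) (K : ℕ) :
    S.mu β w K = S.eigenfunctional β (fun r => (S.F w K r : ℝ)) /
      (β ^ K * S.eigenfunctional β (fun r => (S.G r : ℝ))) := by
  rw [eigenfunctional_G]
  simp only [eigenfunctional_apply, recurrenceDefect_apply, mu]

lemma eigenfunctional_G_pos (hβ : 0 < β) : 0 < S.eigenfunctional β (fun r => (S.G r : ℝ)) := by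
  rw [eigenfunctional_G]
  exact Finset.sum_pos (fun i _ => pow_pos hβ i)
    (Finset.nonempty_range_iff.2 (Nat.one_le_iff_ne_zero.1 S.hd))

lemma mu_zero (hβ : 0 < β) (w : ℕ → ℕ) : S.mu β w 0 = 1 := by
  rw [mu_eq_eigenfunctional_div, pow_zero, one_mul]
  simp only [F_zero_left]
  exact div_self (eigenfunctional_G_pos hβ).ne'

theorem isCylinderMass_mu (hβ : β ≠ 0) (hroot : Polynomial.aeval β S.charPoly = 0) :
    IsCylinderMass (S.a 0 + 1) (S.mu β) := by
  intro w K
  have hrec := F_add_d (S := S) w K 0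
  rw [zero_add] at hrec
  have hsum : ∑ i ∈ Finset.range (S.a 0 + 1),
      S.eigenfunctional β (fun r => (S.F (wordSnoc w K i) (K + 1) r : ℝ)) =
        β * S.eigenfunctional β (fun r => (S.F w K r : ℝ)) := by
    rw [← eigenfunctional_shift hroot (mod_cast hrec), ← map_sum]
    congr 1
    ext r
    simp only [Finset.sum_apply, ← sum_F_wordSnoc, Nat.cast_sum]
  simp only [mu_eq_eigenfunctional_div]
  rw [← Finset.sum_div, hsum, pow_succ', mul_assoc, mul_div_mul_left _ _ hβ]

variable (S) in
lemma exists_abs_mu_le (hβ : 0 < β) : ∃ C, ∀ w K, |S.mu β w K| ≤ C * β⁻¹ ^ K := by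
  obtain ⟨C, hC⟩ := S.exists_abs_eigenfunctional_le β fun r => ((S.a 0 + 1 : ℕ) : ℝ) ^ r
  have hG := eigenfunctional_G_pos (S := S) hβ
  refine ⟨C / S.eigenfunctional β (fun r => (S.G r : ℝ)), fun w K => ?_⟩
  have hF : |S.eigenfunctional β (fun r => (S.F w K r : ℝ))| ≤ C := by
    refine hC _ fun r => ?_
    rw [Nat.abs_cast]
    exact_mod_cast F_le_pow w K r
  rw [mu_eq_eigenfunctional_div, abs_div, abs_of_pos (mul_pos (pow_pos hβ K) hG), inv_pow,
    ← div_eq_mul_inv, div_div, mul_comm (β ^ K)]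
  exact div_le_div_of_nonneg_right hF (by positivity)

lemma exists_dig_eq_of_mu_ne_zero {w : ℕ → ℕ} {K : ℕ} (h : S.mu β w K ≠ 0) :
    ∃ n, ∀ j < K, S.dig n j = w j := by
  by_contra! hno
  have hF : ∀ r, S.F w K r = 0 := fun r => by
    by_contra hr
    obtain ⟨n, hn⟩ := exists_dig_eq_of_F_ne_zero hr
    obtain ⟨j, hj, hne⟩ := hno n
    exact hne (hn j hj)
  exact h (by simp [mu, hF])

theorem Ico_subset_closure_range_psi (hβ : 1 < β) (hroot : Polynomial.aeval β S.charPoly = 0) :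
    Set.Ico (0 : ℝ) 1 ⊆ closure (Set.range (S.psi β)) := by
  intro x hx
  have hβ₀ : 0 < β := one_pos.trans hβ
  obtain ⟨C, hC⟩ := S.exists_abs_mu_le hβ₀
  rw [← mu_zero hβ₀ 0] at hx
  have hmem := (isCylinderMass_mu hβ₀.ne' hroot).mem_closure_image_monnaMap
    (inv_nonneg.2 hβ₀.le) (inv_lt_one_of_one_lt₀ hβ) hC (D := Set.range S.dig)
    (Set.forall_mem_range.2 S.dig_le)
    (fun w K h => Set.exists_range_iff.2 (exists_dig_eq_of_mu_ne_zero h)) hx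
  rwa [← Set.range_comp] at hmem

end NumerationSystem

theorem psi_image_dense_general
    (S : NumerationSystem) (β : ℝ) (hβ : 1 < β) (hroot : Polynomial.aeval β S.charPoly = 0) :
    ∀ x ∈ Set.Ico (0 : ℝ) 1, x ∈ closure {y : ℝ | ∃ n : ℕ, 0 < n ∧ y = S.psi β n} := by
  have hperfect : Preperfect (Set.Ico (0 : ℝ) 1) :=
    isPreconnected_Ico.preperfect_of_nontrivial
      ⟨0, by norm_num, 1 / 2, by norm_num, by norm_num⟩
  have hdense := subset_closure_sdiff_singleton_of_preperfect hperfect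
    (NumerationSystem.Ico_subset_closure_range_psi hβ hroot) (S.psi β 0)
  refine hdense.trans (closure_mono ?_)
  rintro _ ⟨⟨n, rfl⟩, hn⟩
  exact ⟨n, Nat.pos_of_ne_zero fun h => hn (h ▸ rfl), rfl⟩

/-- The image of the positive integers under the extended `β`-adic
Monna map is dense in `[0,1)`. -/
theorem psi_image_dense
    (S : NumerationSystem) (β : ℝ) (hβ : S.IsCharRoot β) :
    ∀ x ∈ Set.Ico (0 : ℝ) 1, x ∈ closure {y : ℝ | ∃ n : ℕ, 0 < n ∧ y = S.psi β n} :=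
  psi_image_dense_general S β hβ.2.2.1 hβ.2.1
end

section
/- Let G=(G_n)_{n≥0} be a numeration system with coefficients a_0 ≥ a_1 ≥ … ≥ a_{d−1} ≥ 1 and let C = gcd(a_0, …, a_{d−1}). Then for every positive integer k there exists an integer n_0 such that C^k divides G_n for all n ≥ n_0. -/
open scoped BigOperators
open scoped Classical

section Divisibility

variable {R : Type*} [CommSemiring R] {E : LinearRecurrence R} {u : ℕ → R} {c : R}

theorem mul_dvd_of_isSolution (hu : E.IsSolution u) (hc : ∀ i, c ∣ E.coeffs i) {b : R} {N : ℕ}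
    (hb : ∀ n, N ≤ n → b ∣ u n) {n : ℕ} (hn : N + E.order ≤ n) : c * b ∣ u n := by
  obtain ⟨m, rfl⟩ := Nat.exists_eq_add_of_le' (le_of_add_le_right hn)
  rw [hu m]
  have hm : N ≤ m := Nat.le_of_add_le_add_right hn
  exact Finset.dvd_sum fun i _ => mul_dvd_mul (hc i) (hb _ (le_add_right hm))

theorem gcd_pow_dvd_G_eventually_general (hu : E.IsSolution u) (hc : ∀ i, c ∣ E.coeffs i)
    (k : ℕ) : ∀ n, k * E.order ≤ n → c ^ k ∣ u n := by
  induction k with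
  | zero => simp
  | succ k ih =>
    intro n hn
    rw [pow_succ']
    exact mul_dvd_of_isSolution hu hc ih (Nat.succ_mul k E.order ▸ hn)

end Divisibility

namespace NumerationSystem

/-- The recurrence of a numeration system as a `LinearRecurrence`. Mathlib multiplies `u (n + i)`
by `coeffs i`, whereas `a i` multiplies `G (n + d - 1 - i)`, so the coefficients are reversed. -/
def linearRecurrence (S : NumerationSystem) : LinearRecurrence ℕ where
  order := S.d
  coeffs i := S.a i.rev

theorem isSolution_G (S : NumerationSystem) :
    S.linearRecurrence.IsSolution S.G := by
  intro n
  calc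
    S.G (n + S.d) = ∑ i : Fin S.d, S.a i * S.G (n + S.d - 1 - i) := by
      rw [S.hG_rec, Finset.sum_range]
    _ = ∑ i : Fin S.d, S.a i.rev * S.G (n + S.d - 1 - i.rev) :=
      (Equiv.sum_comp Fin.revPerm fun i : Fin S.d => S.a i * S.G (n + S.d - 1 - i)).symm
    _ = ∑ i : Fin S.d, S.a i.rev * S.G (n + i) := by
      refine Finset.sum_congr rfl fun i _ => ?_
      have index_eq : n + S.d - 1 - i.rev = n + i := by
        rw [Fin.val_rev]
        omega
      rw [index_eq]

theorem gcd_dvd_linearRecurrence_coeffs (S : NumerationSystem)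
    (i : Fin S.linearRecurrence.order) :
    (Finset.range S.d).gcd S.a ∣ S.linearRecurrence.coeffs i :=
  Finset.gcd_dvd (Finset.mem_range.mpr i.rev.isLt)

end NumerationSystem

/-- With `C = gcd(a_0,…,a_{d-1})`, for every `k` there is `n_0`
such that `C^k ∣ G_n` for all `n ≥ n_0`. -/
theorem gcd_pow_dvd_G_eventually
    (S : NumerationSystem) (k : ℕ) (hk : 0 < k) :
    ∃ n0 : ℕ, ∀ n, n0 ≤ n → (Finset.gcd (Finset.range S.d) S.a) ^ k ∣ S.G n :=
  ⟨k * S.d, gcd_pow_dvd_G_eventually_general S.isSolution_G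
    S.gcd_dvd_linearRecurrence_coeffs k⟩
end
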